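/- (Power balance of the piezo-actuated Kirchhoff–Love plate.) Let $B=[0,L_1]\times[0,L_2]$, let $\mu,\Xi:B\to(0,\infty)$ be smooth with $\partial_1\Xi = \partial_2\Xi = 0$ on $\partial B$, let $\nu\in\mathbb{R}$, let $g_{21},g_{22}:B\to\mathbb{R}$ be smooth, and let $u^1,u^2:\mathbb{R}\to\mathbb{R}$. Let $w:\mathbb{R}\times B\to\mathbb{R}$ be a smooth solution of $\mu\ddot{w} = -\partial_1^2\big(\Xi(w_{[20]}+\nu w_{[02]})\big) - \partial_2^2\big(\Xi(\nu w_{[20]}+w_{[02]})\big) - 2\partial_1\partial_2\big(\Xi(1-\nu)w_{[11]}\big) + g_{21}u^1 + g_{22}u^2$ satisfying, for all $t$: clamped conditions $w = 0$ and $w_{[10]} = 0$ on the edge $z^1 = 0$; free-edge conditions $w_{[20]}+\nu w_{[02]} = 0$ and $w_{[30]}+(2-\nu)w_{[12]} = 0$ on the edge $z^1 = L_1$; free-edge conditions $w_{[02]}+\nu w_{[20]} = 0$ and $w_{[03]}+(2-\nu)w_{[21]} = 0$ on the edges $z^2 = 0$ and $z^2 = L_2$; and the corner conditions $w_{[11]}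 = 0$ at the free corners $(L_1,0)$ and $(L_1,L_2)$. Then the total energy $\mathscr{H}(t) = \iint_B\Big(\frac{\mu}{2}\dot{w}^2 + \frac{\Xi}{2}\big(w_{[20]}^2 + w_{[02]}^2 + 2\nu w_{[20]}w_{[02]} + 2(1-\nu)w_{[11]}^2\big)\Big)dz^1dz^2$ satisfies $\frac{d\mathscr{H}}{dt}(t) = \iint_B\big(g_{21}\,\dot{w}\,u^1(t) + g_{22}\,\dot{w}\,u^2(t)\big)\,dz^1dz^2$ for all $t$. -/

import Mathlib

open MeasureTheory

/-- Time derivative of a field `f(t,z¹,z²)`. -/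
noncomputable def pt2 {E : Type*} [NormedAddCommGroup E] [NormedSpace ℝ E]
    (f : ℝ → ℝ → ℝ → E) : ℝ → ℝ → ℝ → E := fun t a b => deriv (fun s => f s a b) t

/-- Derivative `∂₁` with respect to `z¹`. -/
noncomputable def dz1 {E : Type*} [NormedAddCommGroup E] [NormedSpace ℝ E]
    (f : ℝ → ℝ → ℝ → E) : ℝ → ℝ → ℝ → E := fun t a b => deriv (fun s => f t s b) a

/-- Derivative `∂₂` with respect to `z²`. -/
noncomputable def dz2 {E : Type*} [NormedAddCommGroup E] [NormedSpace ℝ E]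
    (f : ℝ → ℝ → ℝ → E) : ℝ → ℝ → ℝ → E := fun t a b => deriv (fun s => f t a s) b

def Sm (f : ℝ → ℝ → ℝ → ℝ) : Prop :=
  ContDiff ℝ (⊤ : ℕ∞) (fun q : ℝ × ℝ × ℝ => f q.1 q.2.1 q.2.2)

noncomputable def dv (e : ℝ × ℝ × ℝ) (F : ℝ × ℝ × ℝ → ℝ) : ℝ × ℝ × ℝ → ℝ := fun q => fderiv ℝ F q e

theorem dv_smooth (e : ℝ × ℝ × ℝ) {F : ℝ × ℝ × ℝ → ℝ} (h : ContDiff ℝ (⊤ : ℕ∞) F) :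
    ContDiff ℝ (⊤ : ℕ∞) (dv e F) := by
  unfold dv
  exact (h.fderiv_right (m := (⊤ : ℕ∞)) (by simp)).clm_apply contDiff_const

theorem dv_comm (e e' : ℝ × ℝ × ℝ) {F : ℝ × ℝ × ℝ → ℝ} (h : ContDiff ℝ (⊤ : ℕ∞) F) (q) :
    dv e (dv e' F) q = dv e' (dv e F) q := by
  have hd : DifferentiableAt ℝ (fderiv ℝ F) q :=
    ((h.fderiv_right (m := (⊤ : ℕ∞)) (by simp)).differentiable (by simp)) q
  have hs : IsSymmSndFDerivAt ℝ F q := (h.contDiffAt).isSymmSndFDerivAt (by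
    simp only [minSmoothness_of_isRCLikeNormedField]; exact WithTop.coe_le_coe.2 (le_top : (2 : ℕ∞) ≤ ⊤))
  have key : ∀ e e' : ℝ × ℝ × ℝ, dv e (dv e' F) q = fderiv ℝ (fderiv ℝ F) q e e' := by
    intro e e'
    unfold dv
    rw [fderiv_clm_apply hd (differentiableAt_const _)]
    simp
  rw [key, key]
  exact hs e e'

theorem Sm.hf {f} (h : Sm f) (q : ℝ × ℝ × ℝ) :
    HasFDerivAt (fun q : ℝ × ℝ × ℝ => f q.1 q.2.1 q.2.2)
      (fderiv ℝ (fun q : ℝ × ℝ × ℝ => f q.1 q.2.1 q.2.2) q) q :=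
  ((ContDiff.differentiable h (by simp)) q).hasFDerivAt

theorem Sm.at' {f} (h : Sm f) (t a b) : HasDerivAt (fun s => f s a b)
    (dv (1, 0, 0) (fun q : ℝ × ℝ × ℝ => f q.1 q.2.1 q.2.2) (t, a, b)) t :=
  HasFDerivAt.comp_hasDerivAt (f := fun s : ℝ => (s, a, b)) t (h.hf (t, a, b))
    ((hasDerivAt_id t).prodMk (hasDerivAt_const t (a, b)))

theorem Sm.a1' {f} (h : Sm f) (t a b) : HasDerivAt (fun s => f t s b)
    (dv (0, 1, 0) (fun q : ℝ × ℝ × ℝ => f q.1 q.2.1 q.2.2) (t, a, b)) a :=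
  HasFDerivAt.comp_hasDerivAt (f := fun s : ℝ => (t, s, b)) a (h.hf (t, a, b))
    ((hasDerivAt_const a t).prodMk ((hasDerivAt_id a).prodMk (hasDerivAt_const a b)))

theorem Sm.a2' {f} (h : Sm f) (t a b) : HasDerivAt (fun s => f t a s)
    (dv (0, 0, 1) (fun q : ℝ × ℝ × ℝ => f q.1 q.2.1 q.2.2) (t, a, b)) b :=
  HasFDerivAt.comp_hasDerivAt (f := fun s : ℝ => (t, a, s)) b (h.hf (t, a, b))
    ((hasDerivAt_const b t).prodMk ((hasDerivAt_const b a).prodMk (hasDerivAt_id b)))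

theorem Sm.et {f} (h : Sm f) : (fun q : ℝ × ℝ × ℝ => pt2 f q.1 q.2.1 q.2.2) =
    dv (1, 0, 0) (fun q : ℝ × ℝ × ℝ => f q.1 q.2.1 q.2.2) := by
  funext q; exact (h.at' q.1 q.2.1 q.2.2).deriv

theorem Sm.e1 {f} (h : Sm f) : (fun q : ℝ × ℝ × ℝ => dz1 f q.1 q.2.1 q.2.2) =
    dv (0, 1, 0) (fun q : ℝ × ℝ × ℝ => f q.1 q.2.1 q.2.2) := by
  funext q; exact (h.a1' q.1 q.2.1 q.2.2).deriv

theorem Sm.e2 {f} (h : Sm f) : (fun q : ℝ × ℝ × ℝ => dz2 f q.1 q.2.1 q.2.2) =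
    dv (0, 0, 1) (fun q : ℝ × ℝ × ℝ => f q.1 q.2.1 q.2.2) := by
  funext q; exact (h.a2' q.1 q.2.1 q.2.2).deriv

theorem Sm.pt {f} (h : Sm f) : Sm (pt2 f) := by
  unfold Sm; rw [h.et]; exact dv_smooth _ h
theorem Sm.d1 {f} (h : Sm f) : Sm (dz1 f) := by
  unfold Sm; rw [h.e1]; exact dv_smooth _ h
theorem Sm.d2 {f} (h : Sm f) : Sm (dz2 f) := by
  unfold Sm; rw [h.e2]; exact dv_smooth _ h

theorem Sm.ht {f} (h : Sm f) (t a b) : HasDerivAt (fun s => f s a b) (pt2 f t a b) t :=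
  (h.at' t a b).differentiableAt.hasDerivAt
theorem Sm.h1 {f} (h : Sm f) (t a b) : HasDerivAt (fun s => f t s b) (dz1 f t a b) a :=
  (h.a1' t a b).differentiableAt.hasDerivAt
theorem Sm.h2 {f} (h : Sm f) (t a b) : HasDerivAt (fun s => f t a s) (dz2 f t a b) b :=
  (h.a2' t a b).differentiableAt.hasDerivAt

theorem Sm.c12 {f} (h : Sm f) : dz2 (dz1 f) = dz1 (dz2 f) := by
  funext t a b
  have := dv_comm (0, 0, 1) (0, 1, 0) h (t, a, b)
  rw [← h.e1, ← h.e2, ← h.d1.e2, ← h.d2.e1] at this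
  exact this
theorem Sm.ct1 {f} (h : Sm f) : pt2 (dz1 f) = dz1 (pt2 f) := by
  funext t a b
  have := dv_comm (1, 0, 0) (0, 1, 0) h (t, a, b)
  rw [← h.e1, ← h.et, ← h.d1.et, ← h.pt.e1] at this
  exact this
theorem Sm.ct2 {f} (h : Sm f) : pt2 (dz2 f) = dz2 (pt2 f) := by
  funext t a b
  have := dv_comm (1, 0, 0) (0, 0, 1) h (t, a, b)
  rw [← h.e2, ← h.et, ← h.d2.et, ← h.pt.e2] at this
  exact this

theorem Sm.add {f g} (hf : Sm f) (hg : Sm g) : Sm (fun t a b => f t a b + g t a b) :=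
  ContDiff.add hf hg
theorem Sm.sub {f g} (hf : Sm f) (hg : Sm g) : Sm (fun t a b => f t a b - g t a b) :=
  ContDiff.sub hf hg
theorem Sm.mul {f g} (hf : Sm f) (hg : Sm g) : Sm (fun t a b => f t a b * g t a b) :=
  ContDiff.mul hf hg
theorem Sm.cst (c : ℝ) : Sm (fun _ _ _ => c) := contDiff_const
theorem Sm.lift {m : ℝ → ℝ → ℝ} (h : ContDiff ℝ (⊤ : ℕ∞) (fun q : ℝ × ℝ => m q.1 q.2)) :
    Sm (fun _ a b => m a b) := h.comp contDiff_snd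

theorem Sm.cont {f} (h : Sm f) : Continuous (fun q : ℝ × ℝ × ℝ => f q.1 q.2.1 q.2.2) :=
  ContDiff.continuous h
theorem Sm.cont1 {f} (h : Sm f) (t b) : Continuous (fun a => f t a b) :=
  h.cont.comp (f := fun a => (t, a, b)) (by fun_prop)
theorem Sm.cont2 {f} (h : Sm f) (t a) : Continuous (fun b => f t a b) :=
  h.cont.comp (f := fun b => (t, a, b)) (by fun_prop)
theorem Sm.cont12 {f} (h : Sm f) (t) : Continuous (Function.uncurry fun a b => f t a b) :=
  h.cont.comp (f := fun q : ℝ × ℝ => (t, q.1, q.2)) (by fun_prop)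

theorem par_int (F F' : ℝ → ℝ → ℝ) (hF : Continuous (Function.uncurry F))
    (hF' : Continuous (Function.uncurry F')) (hd : ∀ t a, HasDerivAt (fun s => F s a) (F' t a) t)
    (x y t : ℝ) : HasDerivAt (fun s => ∫ a in x..y, F s a) (∫ a in x..y, F' t a) t := by
  have hc : ∀ s, Continuous (F s) := fun s => hF.comp (f := fun a => (s, a)) (by fun_prop)
  have hc' : ∀ s, Continuous (F' s) := fun s => hF'.comp (f := fun a => (s, a)) (by fun_prop)
  obtain ⟨C, hC⟩ := ((isCompact_closedBall t 1).prod (isCompact_uIcc (a := x) (b := y))).exists_bound_of_continuousOn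
    hF'.continuousOn
  refine (intervalIntegral.hasDerivAt_integral_of_dominated_loc_of_deriv_le (F := F) (F' := F')
    (bound := fun _ => C) (Metric.ball_mem_nhds t one_pos) ?_ ?_ ?_ ?_ ?_ ?_).2
  · exact Filter.Eventually.of_forall fun s => (hc s).aestronglyMeasurable
  · exact (hc t).intervalIntegrable _ _
  · exact (hc' t).aestronglyMeasurable
  · refine Filter.Eventually.of_forall fun a ha s hs => ?_
    exact hC (s, a) ⟨Metric.ball_subset_closedBall hs, Set.uIoc_subset_uIcc ha⟩
  · exact intervalIntegrable_const
  · exact Filter.Eventually.of_forall fun a _ s _ => hd s a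

theorem Sm.par {f} (h : Sm f) (x y t : ℝ) :
    HasDerivAt (fun s => ∫ a in (0:ℝ)..x, ∫ b in (0:ℝ)..y, f s a b)
      (∫ a in (0:ℝ)..x, ∫ b in (0:ℝ)..y, pt2 f t a b) t := by
  have key : ∀ {g}, Sm g → Continuous (Function.uncurry fun s a => ∫ b in (0:ℝ)..y, g s a b) := by
    intro g hg
    have : Continuous fun p : ℝ × ℝ => ∫ b in (0:ℝ)..y, g p.1 p.2 b := by
      apply intervalIntegral.continuous_parametric_intervalIntegral_of_continuous'
      exact hg.cont.comp (f := fun q : (ℝ × ℝ) × ℝ => (q.1.1, q.1.2, q.2)) (by fun_prop)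
    exact this
  refine par_int _ _ (key h) (key h.pt) (fun s a => ?_) 0 x t
  refine par_int (fun s b => f s a b) (fun s b => pt2 f s a b) ?_ ?_ (fun s b => h.ht s a b) 0 y s
  · exact h.cont.comp (f := fun q : ℝ × ℝ => (q.1, a, q.2)) (by fun_prop)
  · exact h.pt.cont.comp (f := fun q : ℝ × ℝ => (q.1, a, q.2)) (by fun_prop)

theorem Sm.ftc1 {f} (h : Sm f) (t b x : ℝ) : ∫ a in (0:ℝ)..x, dz1 f t a b = f t x b - f t 0 b :=
  intervalIntegral.integral_eq_sub_of_hasDerivAt (fun a _ => h.h1 t a b)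
    ((h.d1.cont1 t b).intervalIntegrable _ _)
theorem Sm.ftc2 {f} (h : Sm f) (t a x : ℝ) : ∫ b in (0:ℝ)..x, dz2 f t a b = f t a x - f t a 0 :=
  intervalIntegral.integral_eq_sub_of_hasDerivAt (fun b _ => h.h2 t a b)
    ((h.d2.cont2 t a).intervalIntegrable _ _)

theorem Sm.int_add {f g} (hf : Sm f) (hg : Sm g) (t x y : ℝ) :
    ∫ a in (0:ℝ)..x, ∫ b in (0:ℝ)..y, (f t a b + g t a b) =
    (∫ a in (0:ℝ)..x, ∫ b in (0:ℝ)..y, f t a b) + ∫ a in (0:ℝ)..x, ∫ b in (0:ℝ)..y, g t a b := by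
  have key : ∀ {g}, Sm g → Continuous (fun a => ∫ b in (0:ℝ)..y, g t a b) := fun hg =>
    intervalIntegral.continuous_parametric_intervalIntegral_of_continuous' (hg.cont12 t) _ _
  rw [← intervalIntegral.integral_add ((key hf).intervalIntegrable _ _)
    ((key hg).intervalIntegrable _ _)]
  congr 1; funext a
  exact intervalIntegral.integral_add ((hf.cont2 t a).intervalIntegrable _ _)
    ((hg.cont2 t a).intervalIntegrable _ _)

theorem Sm.int1 {f} (h : Sm f) (t x y : ℝ) :
    ∫ a in (0:ℝ)..x, ∫ b in (0:ℝ)..y, dz1 f t a b = ∫ b in (0:ℝ)..y, (f t x b - f t 0 b) := by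
  rw [intervalIntegral_intervalIntegral_swap]
  · congr 1; funext b; exact h.ftc1 t b x
  · exact ((h.d1.cont12 t).continuousOn.integrableOn_compact
      ((isCompact_uIcc (a := (0:ℝ)) (b := x)).prod (isCompact_uIcc (a := (0:ℝ)) (b := y)))).mono_set
      (Set.prod_mono Set.uIoc_subset_uIcc Set.uIoc_subset_uIcc)

/-- power balance of the piezo-actuated Kirchhoff–Love plate,
clamped at the edge `z¹ = 0` and free at the remaining edges. -/
theorem statement9 (L1 L2 : ℝ) (hL1 : 0 < L1) (hL2 : 0 < L2)
    (μ Ξ : ℝ → ℝ → ℝ)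
    (hμ : ContDiff ℝ (⊤ : ℕ∞) (fun q : ℝ × ℝ => μ q.1 q.2))
    (hΞ : ContDiff ℝ (⊤ : ℕ∞) (fun q : ℝ × ℝ => Ξ q.1 q.2))
    (hμpos : ∀ a ∈ Set.Icc (0:ℝ) L1, ∀ b ∈ Set.Icc (0:ℝ) L2, 0 < μ a b)
    (hΞpos : ∀ a ∈ Set.Icc (0:ℝ) L1, ∀ b ∈ Set.Icc (0:ℝ) L2, 0 < Ξ a b)
    -- `∂₁Ξ = ∂₂Ξ = 0` on the boundary of `B`
    (hΞbd : ∀ a b : ℝ,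
      (((a = 0 ∨ a = L1) ∧ b ∈ Set.Icc (0:ℝ) L2)
        ∨ (a ∈ Set.Icc (0:ℝ) L1 ∧ (b = 0 ∨ b = L2))) →
      deriv (fun s => Ξ s b) a = 0 ∧ deriv (fun s => Ξ a s) b = 0)
    (ν : ℝ)
    (g21 g22 : ℝ → ℝ → ℝ)
    (hg21 : ContDiff ℝ (⊤ : ℕ∞) (fun q : ℝ × ℝ => g21 q.1 q.2))
    (hg22 : ContDiff ℝ (⊤ : ℕ∞) (fun q : ℝ × ℝ => g22 q.1 q.2))
    (u1 u2 : ℝ → ℝ)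
    (w : ℝ → ℝ → ℝ → ℝ)
    (hw : ContDiff ℝ (⊤ : ℕ∞) (fun q : ℝ × ℝ × ℝ => w q.1 q.2.1 q.2.2))
    -- the plate equation of motion on `B`
    (hpde : ∀ t : ℝ, ∀ a ∈ Set.Icc (0:ℝ) L1, ∀ b ∈ Set.Icc (0:ℝ) L2,
      μ a b * pt2 (pt2 w) t a b =
        -dz1 (dz1 (fun t a b => Ξ a b * (dz1 (dz1 w) t a b + ν * dz2 (dz2 w) t a b))) t a b
          - dz2 (dz2 (fun t a b => Ξ a b * (ν * dz1 (dz1 w) t a b + dz2 (dz2 w) t a b))) t a b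
          - 2 * dz1 (dz2 (fun t a b => Ξ a b * (1 - ν) * dz1 (dz2 w) t a b)) t a b
          + g21 a b * u1 t + g22 a b * u2 t)
    -- clamped on the edge `z¹ = 0`
    (hclamped : ∀ t : ℝ, ∀ b ∈ Set.Icc (0:ℝ) L2,
      w t 0 b = 0 ∧ dz1 w t 0 b = 0)
    -- free-edge conditions on the edge `z¹ = L1`
    (hfree1 : ∀ t : ℝ, ∀ b ∈ Set.Icc (0:ℝ) L2,
      dz1 (dz1 w) t L1 b + ν * dz2 (dz2 w) t L1 b = 0
      ∧ dz1 (dz1 (dz1 w)) t L1 b + (2 - ν) * dz1 (dz2 (dz2 w)) t L1 b = 0)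
    -- free-edge conditions on the edges `z² = 0` and `z² = L2`
    (hfree2 : ∀ t : ℝ, ∀ a ∈ Set.Icc (0:ℝ) L1, ∀ b ∈ ({0, L2} : Set ℝ),
      dz2 (dz2 w) t a b + ν * dz1 (dz1 w) t a b = 0
      ∧ dz2 (dz2 (dz2 w)) t a b + (2 - ν) * dz1 (dz1 (dz2 w)) t a b = 0)
    -- corner conditions at the free corners
    (hcorner : ∀ t : ℝ, dz1 (dz2 w) t L1 0 = 0 ∧ dz1 (dz2 w) t L1 L2 = 0)
    (t : ℝ) :
    HasDerivAt
      (fun τ => ∫ a in (0:ℝ)..L1, ∫ b in (0:ℝ)..L2,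
        (μ a b / 2 * (pt2 w τ a b) ^ 2
          + Ξ a b / 2 * ((dz1 (dz1 w) τ a b) ^ 2 + (dz2 (dz2 w) τ a b) ^ 2
              + 2 * ν * dz1 (dz1 w) τ a b * dz2 (dz2 w) τ a b
              + 2 * (1 - ν) * (dz1 (dz2 w) τ a b) ^ 2)))
      (∫ a in (0:ℝ)..L1, ∫ b in (0:ℝ)..L2,
        (g21 a b * pt2 w t a b * u1 t + g22 a b * pt2 w t a b * u2 t)) t := by
  have hX : Sm (fun _ a b => Ξ a b) := Sm.lift hΞ
  have hM : Sm (fun _ a b => μ a b) := Sm.lift hμ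
  have hG1 : Sm (fun _ a b => g21 a b) := Sm.lift hg21
  have hG2 : Sm (fun _ a b => g22 a b) := Sm.lift hg22
  have hW : Sm w := hw
  set X : ℝ → ℝ → ℝ → ℝ := fun _ a b => Ξ a b with hXdef
  obtain ⟨v, hv⟩ : ∃ v, v = pt2 w := ⟨_, rfl⟩
  have hV : Sm v := hv ▸ hW.pt
  have hA : Sm (fun t a b => dz1 (dz1 w) t a b + ν * dz2 (dz2 w) t a b) :=
    hW.d1.d1.add ((Sm.cst ν).mul hW.d2.d2)
  have hB : Sm (fun t a b => ν * dz1 (dz1 w) t a b + dz2 (dz2 w) t a b) :=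
    ((Sm.cst ν).mul hW.d1.d1).add hW.d2.d2
  obtain ⟨M1, hM1⟩ : ∃ M : ℝ → ℝ → ℝ → ℝ, M = fun t a b => Ξ a b * (dz1 (dz1 w) t a b + ν * dz2 (dz2 w) t a b) :=
    ⟨_, rfl⟩
  obtain ⟨M2, hM2⟩ : ∃ M : ℝ → ℝ → ℝ → ℝ, M = fun t a b => Ξ a b * (ν * dz1 (dz1 w) t a b + dz2 (dz2 w) t a b) :=
    ⟨_, rfl⟩
  obtain ⟨M3, hM3⟩ : ∃ M : ℝ → ℝ → ℝ → ℝ, M = fun t a b => Ξ a b * (1 - ν) * dz1 (dz2 w) t a b :=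
    ⟨_, rfl⟩
  have sM1 : Sm M1 := hM1 ▸ hX.mul hA
  have sM2 : Sm M2 := hM2 ▸ hX.mul hB
  have sM3 : Sm M3 := hM3 ▸ (hX.mul (Sm.cst (1 - ν))).mul hW.d2.d1
  rw [← hM1, ← hM2, ← hM3] at hpde
  -- energy density
  obtain ⟨e, he⟩ : ∃ e : ℝ → ℝ → ℝ → ℝ, e = fun τ a b => (μ a b / 2 * (pt2 w τ a b) ^ 2
          + Ξ a b / 2 * ((dz1 (dz1 w) τ a b) ^ 2 + (dz2 (dz2 w) τ a b) ^ 2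
              + 2 * ν * dz1 (dz1 w) τ a b * dz2 (dz2 w) τ a b
              + 2 * (1 - ν) * (dz1 (dz2 w) τ a b) ^ 2)) := ⟨_, rfl⟩
  have sE : Sm e := by
    have h1 := hW.d1.d1
    have h2 := hW.d2.d2
    have h3 := hW.d2.d1
    have h4 := hW.pt
    unfold Sm at *
    rw [he]
    fun_prop
  have dE : ∀ a b, pt2 e t a b = μ a b * v t a b * pt2 (pt2 w) t a b
      + M1 t a b * dz1 (dz1 v) t a b + M2 t a b * dz2 (dz2 v) t a b
      + 2 * M3 t a b * dz1 (dz2 v) t a b := by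
    intro a b
    have h1 := hW.d1.d1.ht t a b
    have h2 := hW.d2.d2.ht t a b
    have h3 := hW.d2.d1.ht t a b
    have h4 := hW.pt.ht t a b
    rw [hW.d1.ct1, hW.ct1, ← hv] at h1
    rw [hW.d2.ct2, hW.ct2, ← hv] at h2
    rw [hW.d2.ct1, hW.ct2, ← hv] at h3
    have := ((h4.pow 2).const_mul (μ a b / 2)).add
      (((((h1.pow 2).add (h2.pow 2)).add ((h1.const_mul (2 * ν)).mul h2)).add
        ((h3.pow 2).const_mul (2 * (1 - ν)))).const_mul (Ξ a b / 2))
    have h6 : pt2 e t a b = deriv (fun s => e s a b) t := rfl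
    rw [h6, he]
    refine this.deriv.trans ?_
    rw [hM1, hM2, hM3, hv]
    push_cast
    ring
  obtain ⟨P, hP⟩ : ∃ P : ℝ → ℝ → ℝ → ℝ, P = fun t a b => M1 t a b * dz1 v t a b
    - (dz1 M1 t a b + 2 * dz2 M3 t a b) * v t a b := ⟨_, rfl⟩
  obtain ⟨Q, hQ⟩ : ∃ P : ℝ → ℝ → ℝ → ℝ, P = fun t a b => M2 t a b * dz2 v t a b
    - (dz2 M2 t a b + 2 * dz1 M3 t a b) * v t a b := ⟨_, rfl⟩
  obtain ⟨R, hR⟩ : ∃ P : ℝ → ℝ → ℝ → ℝ, P = fun t a b => 2 * (M3 t a b * v t a b) := ⟨_, rfl⟩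
  obtain ⟨G, hG⟩ : ∃ P : ℝ → ℝ → ℝ → ℝ, P = fun s a b =>
    g21 a b * pt2 w s a b * u1 t + g22 a b * pt2 w s a b * u2 t := ⟨_, rfl⟩
  have sP : Sm P := hP ▸ (sM1.mul hV.d1).sub ((sM1.d1.add ((Sm.cst 2).mul sM3.d2)).mul hV)
  have sQ : Sm Q := hQ ▸ (sM2.mul hV.d2).sub ((sM2.d2.add ((Sm.cst 2).mul sM3.d1)).mul hV)
  have sR : Sm R := hR ▸ (Sm.cst 2).mul (sM3.mul hV)
  have sG : Sm G := hG ▸ ((hG1.mul hW.pt).mul (Sm.cst (u1 t))).add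
    ((hG2.mul hW.pt).mul (Sm.cst (u2 t)))
  have dP : ∀ a b, dz1 P t a b = dz1 M1 t a b * dz1 v t a b + M1 t a b * dz1 (dz1 v) t a b
      - ((dz1 (dz1 M1) t a b + 2 * dz1 (dz2 M3) t a b) * v t a b
        + (dz1 M1 t a b + 2 * dz2 M3 t a b) * dz1 v t a b) := by
    intro a b
    rw [hP]
    exact (((sM1.h1 t a b).mul (hV.d1.h1 t a b)).sub (((sM1.d1.h1 t a b).add
      ((sM3.d2.h1 t a b).const_mul 2)).mul (hV.h1 t a b))).deriv
  have dQ : ∀ a b, dz2 Q t a b = dz2 M2 t a b * dz2 v t a b + M2 t a b * dz2 (dz2 v) t a b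
      - ((dz2 (dz2 M2) t a b + 2 * dz1 (dz2 M3) t a b) * v t a b
        + (dz2 M2 t a b + 2 * dz1 M3 t a b) * dz2 v t a b) := by
    intro a b
    rw [hQ, ← sM3.c12]
    exact (((sM2.h2 t a b).mul (hV.d2.h2 t a b)).sub (((sM2.d2.h2 t a b).add
      ((sM3.d1.h2 t a b).const_mul 2)).mul (hV.h2 t a b))).deriv
  have dR1 : dz1 R = fun t a b => 2 * (dz1 M3 t a b * v t a b + M3 t a b * dz1 v t a b) := by
    funext t a b
    rw [hR]
    exact (((sM3.h1 t a b).mul (hV.h1 t a b)).const_mul 2).deriv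
  have dR : ∀ a b, dz2 (dz1 R) t a b = 2 * ((dz1 (dz2 M3) t a b * v t a b + dz1 M3 t a b * dz2 v t a b)
      + (dz2 M3 t a b * dz1 v t a b + M3 t a b * dz1 (dz2 v) t a b)) := by
    intro a b
    rw [dR1, ← sM3.c12, ← hV.c12]
    exact ((((sM3.d1.h2 t a b).mul (hV.h2 t a b)).add ((sM3.h2 t a b).mul (hV.d1.h2 t a b))).const_mul 2).deriv
  have main := sE.par L1 L2 t
  have hsplit : (∫ a in (0:ℝ)..L1, ∫ b in (0:ℝ)..L2, pt2 e t a b) =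
      ∫ a in (0:ℝ)..L1, ∫ b in (0:ℝ)..L2,
        (((G t a b + dz1 P t a b) + dz2 Q t a b) + dz2 (dz1 R) t a b) := by
    apply intervalIntegral.integral_congr
    intro a ha
    rw [Set.uIcc_of_le hL1.le] at ha
    apply intervalIntegral.integral_congr
    intro b hb
    rw [Set.uIcc_of_le hL2.le] at hb
    have hp := hpde t a ha b hb
    simp only []
    rw [dE, dP, dQ, dR, hG]
    simp only []
    rw [← hv] at hp ⊢
    linear_combination v t a b * hp
  rw [((sG.add sP.d1).add sQ.d2).int_add sR.d1.d2, (sG.add sP.d1).int_add sQ.d2,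
    sG.int_add sP.d1, sP.int1] at hsplit
  have hv0 : ∀ b ∈ Set.Icc (0:ℝ) L2, v t 0 b = 0 := by
    intro b hb
    have : (fun s => w s 0 b) = fun _ => 0 := funext fun s => (hclamped s b hb).1
    rw [hv]; simp [pt2, this]
  have hv1 : ∀ b ∈ Set.Icc (0:ℝ) L2, dz1 v t 0 b = 0 := by
    intro b hb
    have : (fun s => dz1 w s 0 b) = fun _ => 0 := funext fun s => (hclamped s b hb).2
    rw [hv, ← hW.ct1]; simp [pt2, this]
  have m0 : (0:ℝ) ∈ Set.Icc (0:ℝ) L2 := ⟨le_rfl, hL2.le⟩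
  have mL : L2 ∈ Set.Icc (0:ℝ) L2 := ⟨hL2.le, le_rfl⟩
  have zP : (∫ b in (0:ℝ)..L2, (P t L1 b - P t 0 b)) = 0 := by
    rw [intervalIntegral.integral_congr (g := fun _ => (0:ℝ))]
    · simp
    intro b hb
    rw [Set.uIcc_of_le hL2.le] at hb
    obtain ⟨f1, f2⟩ := hfree1 t b hb
    obtain ⟨x1, x2⟩ := hΞbd L1 b (Or.inl ⟨Or.inr rfl, hb⟩)
    have y1 : M1 t L1 b = 0 := by rw [hM1]; simp only []; rw [f1, mul_zero]
    have y2 : dz1 M1 t L1 b + 2 * dz2 M3 t L1 b = 0 := by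
      have k1 : dz1 M1 t L1 b = dz1 X t L1 b * (dz1 (dz1 w) t L1 b + ν * dz2 (dz2 w) t L1 b) + X t L1 b * (dz1 (dz1 (dz1 w)) t L1 b + ν * dz1 (dz2 (dz2 w)) t L1 b) := by
        rw [hM1]
        exact ((hX.h1 t L1 b).mul ((hW.d1.d1.h1 t L1 b).add
          ((hW.d2.d2.h1 t L1 b).const_mul ν))).deriv
      have k2 : dz2 M3 t L1 b = dz2 X t L1 b * (1 - ν) * dz1 (dz2 w) t L1 b + X t L1 b * (1 - ν) * dz2 (dz1 (dz2 w)) t L1 b := by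
        rw [hM3]
        exact (((hX.h2 t L1 b).mul_const (1 - ν)).mul (hW.d2.d1.h2 t L1 b)).deriv
      have x1' : dz1 X t L1 b = 0 := x1
      have x2' : dz2 X t L1 b = 0 := x2
      rw [k1, k2, hW.d2.c12, x1', x2']
      simp only [hXdef]
      linear_combination Ξ L1 b * f2
    simp only [hP]
    rw [y1, y2, hv0 b hb, hv1 b hb]; ring
  have zQ : (∫ a in (0:ℝ)..L1, ∫ b in (0:ℝ)..L2, dz2 Q t a b) = 0 := by
    rw [intervalIntegral.integral_congr (g := fun _ => (0:ℝ))]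
    · simp
    intro a ha
    rw [Set.uIcc_of_le hL1.le] at ha
    have key : ∀ b ∈ ({0, L2} : Set ℝ), Q t a b = 0 := by
      intro b hb
      obtain ⟨f1, f2⟩ := hfree2 t a ha b hb
      obtain ⟨x1, x2⟩ := hΞbd a b (Or.inr ⟨ha, by simpa using hb⟩)
      have y1 : M2 t a b = 0 := by
        rw [hM2]; simp only []; linear_combination Ξ a b * f1
      have y2 : dz2 M2 t a b + 2 * dz1 M3 t a b = 0 := by
        have k1 : dz2 M2 t a b = dz2 X t a b * (ν * dz1 (dz1 w) t a b + dz2 (dz2 w) t a b) + X t a b * (ν * dz2 (dz1 (dz1 w)) t a b + dz2 (dz2 (dz2 w)) t a b) := by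
          rw [hM2]
          exact ((hX.h2 t a b).mul (((hW.d1.d1.h2 t a b).const_mul ν).add
            (hW.d2.d2.h2 t a b))).deriv
        have k2 : dz1 M3 t a b = dz1 X t a b * (1 - ν) * dz1 (dz2 w) t a b + X t a b * (1 - ν) * dz1 (dz1 (dz2 w)) t a b := by
          rw [hM3]
          exact (((hX.h1 t a b).mul_const (1 - ν)).mul (hW.d2.d1.h1 t a b)).deriv
        have x1' : dz1 X t a b = 0 := x1
        have x2' : dz2 X t a b = 0 := x2
        rw [k1, k2, hW.d1.c12, hW.c12, x1', x2']
        simp only [hXdef]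
        linear_combination Ξ a b * f2
      simp only [hQ]
      rw [y1, y2]; ring
    simp only []
    rw [sQ.ftc2, key 0 (by simp), key L2 (by simp), sub_zero]
  have zR : (∫ a in (0:ℝ)..L1, ∫ b in (0:ℝ)..L2, dz2 (dz1 R) t a b) = 0 := by
    simp only [sR.d1.ftc2]
    rw [intervalIntegral.integral_sub ((sR.d1.cont1 t L2).intervalIntegrable _ _)
      ((sR.d1.cont1 t 0).intervalIntegrable _ _), sR.ftc1, sR.ftc1]
    simp only [hR, hM3]
    rw [(hcorner t).1, (hcorner t).2, hv0 0 m0, hv0 L2 mL]; ring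
  rw [zP, zQ, zR, add_zero, add_zero, add_zero] at hsplit
  rw [hsplit, he, hG] at main
  exact main
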